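/- Let γ be a Frenet curve in M³(C) with frame (T,N,B), curvature κ > 0 and torsion τ nowhere zero, and suppose λ ≠ 0 and μ : I → ℝ smooth satisfy μ''(s) + C·μ(s) = −C·λ·κ(s) and (μ'·κ/τ)'(s) = C·λ·τ(s) for all s ∈ I. Define a(s) = −μ'(s)/C, b(s) = a(s)·κ(s)/τ(s), and v = a·T + λ·N + b·B. Then v'(s) = μ(s)·T(s) − C⟨v(s),T(s)⟩·γ(s) and μ'(s) = −C⟨v(s),T(s)⟩ for all s ∈ I; consequently there exists a constant p₀ ∈ ℝ⁴ with v(s) = p₀ − C⟨p₀,γ(s)⟩·γ(s) for all s (so v is the restriction to γ of a concircular vector field, the axis of the concircular helix γ, and ⟨N(s),p₀⟩ = λ for all s). -/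

import Mathlib

/-!
By the Frenet equations and the two equations for `μ`, the `N`- and `B`-components of `v'` cancel
and its `T`-component is `μ`, so `v' = μ T - C a γ`, where `a = ⟨v, T⟩` and `μ' = -C a`. Hence
`v - μ γ` has zero derivative (`μ' γ` cancels `-C a γ`), so it is a constant `p₀` on the connected
set `I`. Pairing with `γ` gives `⟨p₀, γ⟩ = -μ / C`, i.e. `v = p₀ + μ γ = p₀ - C ⟨p₀, γ⟩ γ`, and
pairing with `N` gives `⟨N, p₀⟩ = λ`.
-/

/-- The bilinear form ⟨x,y⟩ = ε x₁y₁ + x₂y₂ + ⋯ on ℝ^m. -/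
noncomputable def form (ε : ℝ) {m : ℕ} [NeZero m] (x y : Fin m → ℝ) : ℝ :=
  (ε - 1) * (x 0 * y 0) + ∑ i, x i * y i

/-- The field v = a·T + λ·N + b·B along γ, with a = -μ'/C and b = a·κ/τ. -/
noncomputable def vField (ε R lam : ℝ) (μ' κ τ : ℝ → ℝ) (T N B : ℝ → Fin 4 → ℝ)
    (s : ℝ) : Fin 4 → ℝ :=
  (-(μ' s) / (ε / R ^ 2)) • T s + lam • N s + ((-(μ' s) / (ε / R ^ 2)) * κ s / τ s) • B s

theorem form_comm (ε : ℝ) (x y : Fin 4 → ℝ) : form ε x y = form ε y x := by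
  simp only [form, Fin.sum_univ_four]; ring

theorem form_add_left (ε : ℝ) (x y z : Fin 4 → ℝ) :
    form ε (x + y) z = form ε x z + form ε y z := by
  simp only [form, Fin.sum_univ_four, Pi.add_apply]; ring

theorem form_sub_left (ε : ℝ) (x y z : Fin 4 → ℝ) :
    form ε (x - y) z = form ε x z - form ε y z := by
  simp only [form, Fin.sum_univ_four, Pi.sub_apply]; ring

theorem form_smul_left (ε c : ℝ) (x z : Fin 4 → ℝ) :
    form ε (c • x) z = c * form ε x z := by
  simp only [form, Fin.sum_univ_four, Pi.smul_apply, smul_eq_mul]; ring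

/-- If λ ≠ 0 and μ satisfy μ'' + C·μ = -C·λ·κ and (μ'·κ/τ)' = C·λ·τ along a nonplanar
Frenet curve γ in M³(C), then v = a·T + λ·N + b·B (a = -μ'/C, b = a·κ/τ) satisfies
v' = μ·T - C⟨v,T⟩·γ and μ' = -C⟨v,T⟩; consequently v is the restriction to γ of a
concircular vector field: v(s) = p₀ - C⟨p₀,γ(s)⟩·γ(s) for a constant p₀, with
⟨N,p₀⟩ = λ, so γ is a proper concircular helix with axis determined by p₀. -/
theorem ode_solutions_give_concircular_axis
    (ε R : ℝ) (hε : ε = 1 ∨ ε = -1) (hR : 0 < R)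
    (I : Set ℝ) (hIo : IsOpen I) (hIc : IsPreconnected I)
    (γ T N B : ℝ → Fin 4 → ℝ) (κ τ : ℝ → ℝ)
    (hγs : ContDiffOn ℝ (⊤ : ℕ∞) γ I) (hTs : ContDiffOn ℝ (⊤ : ℕ∞) T I)
    (hNs : ContDiffOn ℝ (⊤ : ℕ∞) N I) (hBs : ContDiffOn ℝ (⊤ : ℕ∞) B I)
    (hκs : ContDiffOn ℝ (⊤ : ℕ∞) κ I) (hτs : ContDiffOn ℝ (⊤ : ℕ∞) τ I)
    (hγM : ∀ s ∈ I, form ε (γ s) (γ s) = 1 / (ε / R ^ 2))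
    (hκpos : ∀ s ∈ I, 0 < κ s)
    (hτ0 : ∀ s ∈ I, τ s ≠ 0)
    (hγ' : ∀ s ∈ I, HasDerivAt γ (T s) s)
    (hTγ : ∀ s ∈ I, form ε (T s) (γ s) = 0)
    (hNγ : ∀ s ∈ I, form ε (N s) (γ s) = 0)
    (hBγ : ∀ s ∈ I, form ε (B s) (γ s) = 0)
    (hTT : ∀ s ∈ I, form ε (T s) (T s) = 1)
    (hNN : ∀ s ∈ I, form ε (N s) (N s) = 1)
    (hBB : ∀ s ∈ I, form ε (B s) (B s) = 1)
    (hTN : ∀ s ∈ I, form ε (T s) (N s) = 0)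
    (hTB : ∀ s ∈ I, form ε (T s) (B s) = 0)
    (hNB : ∀ s ∈ I, form ε (N s) (B s) = 0)
    (hT' : ∀ s ∈ I, HasDerivAt T (-(ε / R ^ 2) • γ s + κ s • N s) s)
    (hN' : ∀ s ∈ I, HasDerivAt N (-(κ s) • T s + τ s • B s) s)
    (hB' : ∀ s ∈ I, HasDerivAt B (-(τ s) • N s) s)
    (lam : ℝ) (hlam : lam ≠ 0)
    (μ μ' μ'' : ℝ → ℝ)
    (hμ' : ∀ s ∈ I, HasDerivAt μ (μ' s) s)
    (hμ'' : ∀ s ∈ I, HasDerivAt μ' (μ'' s) s)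
    (hode1 : ∀ s ∈ I, μ'' s + (ε / R ^ 2) * μ s = -((ε / R ^ 2) * lam * κ s))
    (hode2 : ∀ s ∈ I, HasDerivAt (fun u => μ' u * κ u / τ u)
      ((ε / R ^ 2) * lam * τ s) s) :
    (∀ s ∈ I, HasDerivAt (vField ε R lam μ' κ τ T N B)
      (μ s • T s -
        ((ε / R ^ 2) * form ε (vField ε R lam μ' κ τ T N B s) (T s)) • γ s) s) ∧
    (∀ s ∈ I, μ' s = -((ε / R ^ 2) * form ε (vField ε R lam μ' κ τ T N B s) (T s))) ∧
    (∃ p₀ : Fin 4 → ℝ,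
      (∀ s ∈ I, vField ε R lam μ' κ τ T N B s =
        p₀ - ((ε / R ^ 2) * form ε p₀ (γ s)) • γ s) ∧
      (∀ s ∈ I, form ε (N s) p₀ = lam)) := by
  have hC : ε / R ^ 2 ≠ 0 := by
    refine div_ne_zero ?_ (by positivity)
    rcases hε with h | h <;> rw [h] <;> norm_num
  have hvT : ∀ s ∈ I, form ε (vField ε R lam μ' κ τ T N B s) (T s) = -(μ' s) / (ε / R ^ 2) := by
    intro s hs
    simp only [vField, form_add_left, form_smul_left]
    rw [hTT s hs, form_comm ε (N s), hTN s hs, form_comm ε (B s), hTB s hs]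
    ring
  have hvγ : ∀ s ∈ I, form ε (vField ε R lam μ' κ τ T N B s) (γ s) = 0 := by
    intro s hs
    simp only [vField, form_add_left, form_smul_left]
    rw [hTγ s hs, hNγ s hs, hBγ s hs]
    ring
  have hvN : ∀ s ∈ I, form ε (vField ε R lam μ' κ τ T N B s) (N s) = lam := by
    intro s hs
    simp only [vField, form_add_left, form_smul_left]
    rw [hTN s hs, hNN s hs, form_comm ε (B s), hNB s hs]
    ring
  generalize hCdef : ε / R ^ 2 = C at *
  have hμT : ∀ s ∈ I, μ' s = -(C * form ε (vField ε R lam μ' κ τ T N B s) (T s)) := by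
    intro s hs
    rw [hvT s hs]
    field_simp
  have hv' : ∀ s ∈ I, HasDerivAt (vField ε R lam μ' κ τ T N B)
      (μ s • T s - (C * form ε (vField ε R lam μ' κ τ T N B s) (T s)) • γ s) s := by
    intro s hs
    have ha : HasDerivAt (fun u => -(μ' u) / C) (μ s + lam * κ s) s := by
      refine ((hμ'' s hs).neg.div_const C).congr_deriv ?_
      field_simp
      linear_combination -(hode1 s hs)
    have hb : HasDerivAt (fun u => (-(μ' u) / C) * κ u / τ u) (-(lam * τ s)) s := by
      have hfun : (fun u => (-(μ' u) / C) * κ u / τ u) =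
          fun u => (-1 / C) * (μ' u * κ u / τ u) := by
        funext u
        ring
      rw [hfun]
      refine ((hode2 s hs).const_mul (-1 / C)).congr_deriv ?_
      field_simp
    have h := ((ha.smul (hT' s hs)).add ((hN' s hs).const_smul lam)).add (hb.smul (hB' s hs))
    have hτ := hτ0 s hs
    have hbτ : (-(μ' s) / C) * κ s / τ s * τ s = (-(μ' s) / C) * κ s := by field_simp
    subst hCdef
    refine HasDerivAt.congr_deriv (f := vField ε R lam μ' κ τ T N B) h ?_
    rw [hvT s hs]
    ext i
    simp only [Pi.add_apply, Pi.sub_apply, Pi.smul_apply, Pi.neg_apply, smul_eq_mul]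
    linear_combination -(N s i) * hbτ
  refine ⟨hv', hμT, ?_⟩
  have hp' : ∀ s ∈ I,
      HasDerivAt (fun u => vField ε R lam μ' κ τ T N B u - μ u • γ u) 0 s := by
    intro s hs
    refine ((hv' s hs).sub ((hμ' s hs).smul (hγ' s hs))).congr_deriv ?_
    rw [hμT s hs]
    module
  obtain ⟨p₀, hp₀⟩ := hIo.exists_is_const_of_deriv_eq_zero hIc
    (fun s hs => (hp' s hs).differentiableAt.differentiableWithinAt)
    (fun s hs => (hp' s hs).deriv)
  refine ⟨p₀, fun s hs => ?_, fun s hs => ?_⟩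
  · have hpγ : C * form ε p₀ (γ s) = -μ s := by
      rw [← hp₀ s hs, form_sub_left, form_smul_left, hvγ s hs, hγM s hs]
      field_simp
      ring
    rw [hpγ, ← hp₀ s hs]
    module
  · rw [form_comm, ← hp₀ s hs, form_sub_left, form_smul_left, hvN s hs, form_comm ε (γ s),
      hNγ s hs]
    ring
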